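/- arXiv:2307.02415 — 8 statements merged into one kernel-verified Lean document; each statement's English description precedes it below -/
import Mathlib

section
/- For every finite simple graph G with maximum degree Δ, there exists a proper (Δ+1)-edge-coloring of G, i.e., a function assigning to every edge a color in {1,…,Δ+1} such that any two distinct edges sharing an endpoint receive distinct colors. -/
namespace VizingProof

variable {V K : Type*}

structure Good (G : SimpleGraph V) (c : V → V → Option K) : Prop where
  symm : ∀ u v, c u v = c v u
  adj : ∀ u v a, c u v = some a → G.Adj u v
  proper : ∀ u v w a, c u v = some a → c u w = some a → v = w

def Miss (c : V → V → Option K) (u : V) (a : K) : Prop := ∀ v, c u v ≠ some a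

open Classical in
noncomputable def upd (c : V → V → Option K) (x z : V) (a : K) : V → V → Option K :=
  fun u v => if (u = x ∧ v = z) ∨ (u = z ∧ v = x) then some a else c u v

lemma upd_good {G : SimpleGraph V} {c : V → V → Option K} (h : Good G c) {x z : V} {a : K}
    (hxz : G.Adj x z) (hx : Miss c x a) (hz : Miss c z a) : Good G (upd c x z a) := by
  have hne := hxz.ne
  have hs := hxz.symm
  obtain ⟨h1, h2, h3⟩ := h
  unfold Miss at *
  refine ⟨?_, ?_, ?_⟩
  · intro u v
    have := h1 u v
    unfold upd
    grind
  · intro u v b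
    have := h2 u v b
    unfold upd
    grind
  · intro u v w b
    have := h3 u v w b
    unfold upd
    grind

/-- x-fan step -/
def Path (c : V → V → Option K) (x y0 : V) (f : ℕ → V) (n : ℕ) : Prop :=
  f 0 = y0 ∧ ∀ i < n, ∃ a, c x (f (i+1)) = some a ∧ Miss c (f i) a

lemma factA {G : SimpleGraph V} {x y0 : V} (hxy : G.Adj x y0) (f : ℕ → V) (n : ℕ) :
    ∀ (c : V → V → Option K), Good G c → c x y0 = none → Path c x y0 f n →
    (∃ a, Miss c x a ∧ Miss c (f n) a) →
    ∃ c' : V → V → Option K, Good G c' ∧ (∀ u v, c u v ≠ none → c' u v ≠ none) ∧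
      c' x y0 ≠ none := by
  induction n using Nat.strong_induction_on with
  | _ n ih =>
    intro c hc h0 hp ⟨a, hxa, hfa⟩
    obtain ⟨hp0, hp⟩ := hp
    by_cases hrep : ∃ i < n, f i = f n
    · obtain ⟨i, hi, hin⟩ := hrep
      exact ih i hi c hc h0 ⟨hp0, fun j hj => hp j (by omega)⟩ ⟨a, hxa, hin ▸ hfa⟩
    push Not at hrep
    have hadj : ∀ i ≤ n, G.Adj x (f i) := by
      intro i hi
      rcases i with _ | i
      · rw [hp0]; exact hxy
      · obtain ⟨b, hb, _⟩ := hp i (by omega)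
        exact hc.adj _ _ _ hb
    have hg := upd_good hc (hadj n le_rfl) hxa hfa
    have hmono : ∀ u v, c u v ≠ none → upd c x (f n) a u v ≠ none := by
      intro u v; unfold upd; grind
    rcases n with _ | n
    · refine ⟨_, hg, hmono, ?_⟩
      simp [upd, hp0]
    · obtain ⟨b, hb, hbm⟩ := hp n (by omega)
      have hmiss : ∀ i ≤ n, ∀ d, Miss c (f i) d → Miss (upd c x (f (n+1)) a) (f i) d := by
        intro i hi d hd v
        have h1 := hrep i (by omega)
        have h2 := (hadj i (by omega)).ne
        have h3 := hd v
        unfold upd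
        grind
      obtain ⟨c', h1, h2, h3⟩ := ih n (by omega) (upd c x (f (n+1)) a) hg (by
          have := hrep 0 (by omega)
          have h2 := hxy.ne
          unfold upd; grind) ⟨hp0, by
          intro i hi
          obtain ⟨d, hd, hdm⟩ := hp i (by omega)
          refine ⟨d, ?_, hmiss i (by omega) d hdm⟩
          have h1 := hrep (i+1) (by omega)
          have h2 := (hadj (i+1) (by omega)).ne
          unfold upd; grind⟩ ⟨b, by
          intro v
          have h1 := hc.proper x v (f (n+1)) b
          have h2 := hxa (f (n+1))
          have h3 := (hadj (n+1) le_rfl).ne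
          unfold upd; grind, hmiss n le_rfl b hbm⟩
      exact ⟨c', h1, fun u v h => h2 u v (hmono u v h), h3⟩

open Classical in
noncomputable def kswap (c : V → V → Option K) (S : Set V) (a b : K) : V → V → Option K :=
  fun u v => if u ∈ S then (c u v).map (Equiv.swap a b) else c u v

lemma kswap_good {G : SimpleGraph V} {c : V → V → Option K} (h : Good G c) {S : Set V} {a b : K}
    (hS : ∀ u v, (c u v = some a ∨ c u v = some b) → (u ∈ S ↔ v ∈ S)) :
    Good G (kswap c S a b) := by
  classical
  obtain ⟨h1, h2, h3⟩ := h
  refine ⟨?_, ?_, ?_⟩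
  · intro u v
    have := hS u v
    unfold kswap
    rw [h1 v u]
    rcases hc : c u v with _ | d
    · simp
    · by_cases hd : d = a ∨ d = b
      · have := this (by rcases hd with rfl | rfl <;> simp [hc])
        simp [this]
      · push Not at hd
        simp [Equiv.swap_apply_of_ne_of_ne hd.1 hd.2]
  · intro u v d
    unfold kswap
    rcases hc : c u v with _ | e
    · simp
    · intro _; exact h2 u v e hc
  · intro u v w d
    unfold kswap
    split_ifs
    · simp only [Option.map_eq_some_iff]
      rintro ⟨e, he, rfl⟩ ⟨e', he', h⟩
      have := (Equiv.swap a b).injective h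
      subst this
      exact h3 _ _ _ _ he he'
    · exact h3 u v w d

lemma three [Fintype V] (H : SimpleGraph V) (D : V → ℕ)
    (hD : ∀ u, ∀ s : Finset V, (∀ v ∈ s, H.Adj u v) → s.card ≤ D u)
    (h2 : ∀ u, D u ≤ 2) {x y z : V} (hxy : x ≠ y) (hxz : x ≠ z) (hyz : y ≠ z)
    (hx : D x ≤ 1) (hy : D y ≤ 1) (hz : D z ≤ 1) (ry : H.Reachable x y) (rz : H.Reachable x z) :
    False := by
  classical
  let C := H.connectedComponentMk x
  have hconn : (H.induce C.supp).Connected := C.connected_toSimpleGraph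
  have hE := hconn.card_vert_le_card_edgeSet_add_one
  have hsum := (H.induce C.supp).sum_degrees_eq_twice_card_edges
  rw [Nat.card_eq_fintype_card, Nat.card_eq_fintype_card, ← SimpleGraph.edgeFinset_card] at hE
  have hdeg : ∀ v : C.supp, (H.induce C.supp).degree v ≤ D v := by
    intro v
    have := hD v (((H.induce C.supp).neighborFinset v).map (Function.Embedding.subtype _)) (by
      intro w hw
      simp only [Finset.mem_map, SimpleGraph.mem_neighborFinset] at hw
      obtain ⟨w', hw', rfl⟩ := hw
      exact hw')
    rwa [Finset.card_map] at this
  let X : C.supp := ⟨x, rfl⟩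
  let Y : C.supp := ⟨y, SimpleGraph.ConnectedComponent.eq.2 ry.symm⟩
  let Z : C.supp := ⟨z, SimpleGraph.ConnectedComponent.eq.2 rz.symm⟩
  have hle : ∑ v : C.supp, ((H.induce C.supp).degree v + if v ∈ ({X, Y, Z} : Finset C.supp) then 1 else 0)
      ≤ ∑ v : C.supp, 2 := by
    apply Finset.sum_le_sum
    intro v _
    have := hdeg v
    have := h2 v
    split_ifs with hv
    · simp only [Finset.mem_insert, Finset.mem_singleton] at hv
      rcases hv with rfl | rfl | rfl
      · have : D X ≤ 1 := hx
        omega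
      · have : D Y ≤ 1 := hy
        omega
      · have : D Z ≤ 1 := hz
        omega
    · omega
  rw [Finset.sum_add_distrib, Finset.sum_ite_mem, Finset.univ_inter, Finset.sum_const,
    Finset.sum_const, Finset.card_univ, hsum] at hle
  have : ({X, Y, Z} : Finset C.supp).card = 3 := by
    apply Finset.card_eq_three.2
    exact ⟨X, Y, Z, fun e => hxy (congrArg Subtype.val e), fun e => hxz (congrArg Subtype.val e),
      fun e => hyz (congrArg Subtype.val e), rfl⟩
  simp only [this, smul_eq_mul] at hle
  omega

/-- Kempe graph -/
def KG {G : SimpleGraph V} {c : V → V → Option K} (h : Good G c) (a b : K) : SimpleGraph V where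
  Adj u v := c u v = some a ∨ c u v = some b
  symm := ⟨by intro u v; rw [h.symm u v]; exact id⟩
  loopless := ⟨by intro u hu; rcases hu with hu | hu <;> exact (h.adj _ _ _ hu).ne rfl⟩

lemma KG_three [Fintype V] {G : SimpleGraph V} {c : V → V → Option K} (h : Good G c) (a b : K)
    {x y z : V} (hxy : x ≠ y) (hxz : x ≠ z) (hyz : y ≠ z)
    (hx : Miss c x a) (hy : Miss c y b) (hz : Miss c z b)
    (ry : (KG h a b).Reachable x y) (rz : (KG h a b).Reachable x z) : False := by
  classical
  let P : V → Finset (Option K) := fun u =>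
    ({some a, some b} : Finset (Option K)).filter (fun o => ∃ v, c u v = o)
  have hle : ∀ u (o : Option K), (∀ v, c u v ≠ o) → (o = some a ∨ o = some b) → (P u).card ≤ 1 := by
    intro u o ho hab
    have hsub : P u ⊆ ({some a, some b} : Finset (Option K)).erase o := by
      intro p hp
      simp only [P, Finset.mem_filter] at hp
      obtain ⟨hp, v, hv⟩ := hp
      exact Finset.mem_erase.2 ⟨fun e => ho v (hv.trans e), hp⟩
    have := Finset.card_le_card hsub
    have h3 : o ∈ ({some a, some b} : Finset (Option K)) := by simpa using hab
    rw [Finset.card_erase_of_mem h3] at this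
    have := Finset.card_le_two (a := some a) (b := some b)
    omega
  refine three (KG h a b) (fun u => (P u).card) ?_ ?_ hxy hxz hyz ?_ ?_ ?_ ry rz
  · intro u s hs
    apply Finset.card_le_card_of_injOn (fun v => c u v)
    · intro v hv
      have : c u v = some a ∨ c u v = some b := hs v hv
      simp only [P, Finset.coe_filter, Set.mem_ofPred_eq]
      refine ⟨?_, v, rfl⟩
      simpa using this
    · intro v hv w hw hvw
      simp only at hvw
      rcases hs v hv with e | e
      · exact h.proper u v w a e (hvw ▸ e)
      · exact h.proper u v w b e (hvw ▸ e)
  · intro u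
    exact (Finset.card_filter_le _ _).trans Finset.card_le_two
  · exact hle x _ hx (Or.inl rfl)
  · exact hle y _ hy (Or.inr rfl)
  · exact hle z _ hz (Or.inr rfl)

lemma extend [Fintype V] {G : SimpleGraph V} {c : V → V → Option K} (hc : Good G c)
    (hmiss : ∀ u, ∃ a, Miss c u a) {x y0 : V} (hxy : G.Adj x y0) (h0 : c x y0 = none) :
    ∃ c' : V → V → Option K, Good G c' ∧ (∀ u v, c u v ≠ none → c' u v ≠ none) ∧
      c' x y0 ≠ none := by
  classical
  by_contra hno
  have hA : ∀ f n, Path c x y0 f n → ∀ a, Miss c x a → ¬ Miss c (f n) a := by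
    intro f n hp a ha hf
    exact hno (factA hxy f n c hc h0 hp ⟨a, ha, hf⟩)
  obtain ⟨a, ha⟩ := hmiss x
  have hadj : ∀ f n, Path c x y0 f n → G.Adj x (f n) := by
    intro f n hp
    rcases n with _ | n
    · rw [hp.1]; exact hxy
    · obtain ⟨b, hb, _⟩ := hp.2 n (by omega)
      exact hc.adj _ _ _ hb
  -- any fan vertex missing b is reachable from x
  have hR : ∀ b f n, Path c x y0 f n → Miss c (f n) b → (KG hc a b).Reachable x (f n) := by
    intro b f n
    induction n using Nat.strong_induction_on with
    | _ n ih =>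
      intro hp hb
      by_contra hnr
      have hpi : ∀ i ≤ n, Path c x y0 f i := fun i hi => ⟨hp.1, fun j hj => hp.2 j (by omega)⟩
      let S : Set V := {u | ¬ (KG hc a b).Reachable x u}
      have hS : ∀ u v, (c u v = some a ∨ c u v = some b) → (u ∈ S ↔ v ∈ S) := by
        intro u v huv
        have hh : (KG hc a b).Adj u v := huv
        exact not_congr ⟨fun h => h.trans hh.reachable, fun h => h.trans hh.symm.reachable⟩
      have hg := kswap_good hc hS
      have hxS : x ∉ S := fun h => h (SimpleGraph.Reachable.refl x)
      have hxe : ∀ v, kswap c S a b x v = c x v := by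
        intro v; simp [kswap, hxS]
      apply hno
      obtain ⟨c', h1, h2, h3⟩ := factA hxy f n (kswap c S a b) hg (by rw [hxe, h0]) ⟨hp.1, by
        intro i hi
        obtain ⟨d, hd, hdm⟩ := hp.2 i hi
        refine ⟨d, by rw [hxe, hd], ?_⟩
        by_cases hiS : f i ∈ S
        · have hdb : d ≠ b := by
            rintro rfl
            exact hiS (ih i hi (hpi i hi.le) hdm)
          have hda : d ≠ a := by
            rintro rfl
            exact ha _ hd
          intro v hv
          simp only [kswap, hiS, if_true, Option.map_eq_some_iff] at hv
          obtain ⟨e, he, hed⟩ := hv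
          rw [Equiv.swap_apply_eq_iff, Equiv.swap_apply_of_ne_of_ne hda hdb] at hed
          exact hdm v (hed ▸ he)
        · intro v hv
          simp only [kswap, hiS, if_false] at hv
          exact hdm v hv⟩ ⟨a, fun v => by rw [hxe]; exact ha v, by
            intro v hv
            have hnS : f n ∈ S := hnr
            simp only [kswap, hnS, if_true, Option.map_eq_some_iff] at hv
            obtain ⟨e, he, hed⟩ := hv
            rw [Equiv.swap_apply_eq_iff, Equiv.swap_apply_left] at hed
            exact hb v (hed ▸ he)⟩
      refine ⟨c', h1, fun u v huv => h2 u v ?_, h3⟩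
      unfold kswap
      split_ifs
      · simpa using huv
      · exact huv
  let R : Set V := {y | ∃ f n, Path c x y0 f n ∧ f n = y}
  have hex : ∀ y : R, ∃ z : R, ∃ b, c x z = some b ∧ Miss c y b := by
    rintro ⟨y, f, n, hp, rfl⟩
    obtain ⟨b, hb⟩ := hmiss (f n)
    have : ¬ Miss c x b := fun h => hA f n hp b h hb
    unfold Miss at this
    push Not at this
    obtain ⟨z, hz⟩ := this
    refine ⟨⟨z, fun i => if i ≤ n then f i else z, n+1, ⟨by simp [hp.1], ?_⟩, by simp⟩, b, hz, hb⟩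
    intro i hi
    by_cases hin : i = n
    · subst hin
      exact ⟨b, by simpa using hz, by simpa using hb⟩
    · have h1 : i ≤ n := by omega
      have h2 : i + 1 ≤ n := by omega
      simp only [h1, h2, if_true]
      exact hp.2 i (by omega)
  choose g b hgb hbm using hex
  have hinj : Function.Injective g := by
    intro y z hyz
    have hbb : b y = b z := by
      have h1 := hgb y
      rw [hyz, hgb z] at h1
      exact (Option.some.inj h1).symm
    by_contra hne
    have h1 := hbm y
    have h2 := hbm z
    rw [← hbb] at h2
    obtain ⟨y', f, n, hp, rfl⟩ := y
    obtain ⟨z', f', n', hp', rfl⟩ := z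
    exact KG_three hc a _ (hadj f n hp).ne (hadj f' n' hp').ne (fun h => hne (Subtype.ext h))
      ha h1 h2 (hR _ f n hp h1) (hR _ f' n' hp' h2)
  have hsurj := Finite.surjective_of_injective hinj
  obtain ⟨y, hy⟩ := hsurj ⟨y0, fun _ => y0, 0, ⟨rfl, by simp⟩, rfl⟩
  have := hgb y
  rw [hy, h0] at this
  cases this

lemma exists_miss [Fintype V] (G : SimpleGraph V) [DecidableRel G.Adj]
    {c : V → V → Option (Fin (G.maxDegree + 1))} (hc : Good G c) (u : V) : ∃ a, Miss c u a := by
  classical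
  by_contra h
  unfold Miss at h
  push Not at h
  choose g hg using h
  have : (Finset.univ : Finset (Fin (G.maxDegree + 1))).card ≤ (G.neighborFinset u).card := by
    apply Finset.card_le_card_of_injOn g
    · intro a _
      simpa using hc.adj _ _ _ (hg a)
    · intro a _ b _ hab
      have h1 := hg a
      rw [hab, hg b] at h1
      exact (Option.some.inj h1).symm
  have h2 := G.degree_le_maxDegree u
  rw [Finset.card_univ, Fintype.card_fin, SimpleGraph.card_neighborFinset_eq_degree] at this
  omega

lemma all_colored [Fintype V] (G : SimpleGraph V) [DecidableRel G.Adj] (s : Finset (V × V)) :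
    ∃ c : V → V → Option (Fin (G.maxDegree + 1)), Good G c ∧
      ∀ p ∈ s, G.Adj p.1 p.2 → c p.1 p.2 ≠ none := by
  classical
  induction s using Finset.induction_on with
  | empty => exact ⟨fun _ _ => none, ⟨by simp, by simp, by simp⟩, by simp⟩
  | insert p s _ ih =>
    obtain ⟨c, hc, hs⟩ := ih
    by_cases hp : G.Adj p.1 p.2 ∧ c p.1 p.2 = none
    · obtain ⟨c', h1, h2, h3⟩ := extend hc (exists_miss G hc) hp.1 hp.2
      refine ⟨c', h1, fun q hq hadj => ?_⟩
      rcases Finset.mem_insert.1 hq with rfl | hq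
      · exact h3
      · exact h2 _ _ (hs q hq hadj)
    · refine ⟨c, hc, fun q hq hadj => ?_⟩
      rcases Finset.mem_insert.1 hq with rfl | hq
      · exact fun h => hp ⟨hadj, h⟩
      · exact hs q hq hadj

end VizingProof


/-- For every finite simple graph `G` with maximum degree `Δ`, there exists a proper
`(Δ+1)`-edge-coloring of `G`: a function assigning to every edge a color in a palette of
`Δ+1` colors such that any two distinct edges sharing an endpoint receive distinct colors. -/
theorem vizing_existence {V : Type*} [Fintype V] [DecidableEq V]
    (G : SimpleGraph V) [DecidableRel G.Adj] :
    ∃ C : Sym2 V → Fin (G.maxDegree + 1),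
      ∀ e ∈ G.edgeSet, ∀ f ∈ G.edgeSet, e ≠ f → (∃ v : V, v ∈ e ∧ v ∈ f) → C e ≠ C f := by
  obtain ⟨c, hc, hall⟩ := VizingProof.all_colored G Finset.univ
  refine ⟨fun e => Sym2.lift ⟨fun u v => (c u v).getD 0, fun u v => by simp only [hc.symm u v]⟩ e, ?_⟩
  rintro e he f hf hne ⟨v, hve, hvf⟩ heq
  obtain ⟨u, rfl⟩ := Sym2.mem_iff_exists.1 hve
  obtain ⟨w, rfl⟩ := Sym2.mem_iff_exists.1 hvf
  have h1 := hall (v, u) (Finset.mem_univ _) he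
  have h2 := hall (v, w) (Finset.mem_univ _) hf
  obtain ⟨a, ha⟩ := Option.ne_none_iff_exists'.1 h1
  obtain ⟨b, hb⟩ := Option.ne_none_iff_exists'.1 h2
  simp only [Sym2.lift_mk] at heq
  simp only at ha hb
  rw [ha, hb] at heq
  simp only [Option.getD_some] at heq
  subst heq
  exact hne (by rw [hc.proper v u w a ha hb])
end

section
/- Let χ be a partial (Δ+1)-edge-coloring of G and let e be an uncolored edge of G. Then there exists a partial (Δ+1)-edge-coloring χ' of G in which e is colored and every edge colored by χ is also colored by χ' (i.e., the set of colored edges of χ' contains the set of colored edges of χ together with e). -/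
namespace EC

/-- A partial `k`-edge-coloring of `G`: a function assigning to each edge of `G` either a
color in the palette `Fin k` or `none` (uncolored), such that non-edges are uncolored and
any two distinct colored edges sharing an endpoint receive distinct colors. -/
def IsPartialColoring {V : Type*} (G : SimpleGraph V) (k : ℕ)
    (χ : Sym2 V → Option (Fin k)) : Prop :=
  (∀ e, e ∉ G.edgeSet → χ e = none) ∧
  ∀ e f : Sym2 V, e ≠ f → (∃ v : V, v ∈ e ∧ v ∈ f) →
    ∀ c : Fin k, χ e = some c → χ f ≠ some c


def Miss {V : Type*} {k : ℕ} (χ : Sym2 V → Option (Fin k)) (v : V) (c : Fin k) : Prop :=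
  ∀ w, χ s(v, w) ≠ some c

inductive Fan {V : Type*} {k : ℕ} (χ : Sym2 V → Option (Fin k)) (x y : V) : List V → Prop
  | base : Fan χ x y [y]
  | cons (w z : V) (L : List V) (c : Fin k) : Fan χ x y (z :: L) → w ∉ z :: L →
      χ s(x, w) = some c → Miss χ z c → Fan χ x y (w :: z :: L)

section
variable {V : Type*} {k : ℕ} {G : SimpleGraph V} {χ χ' : Sym2 V → Option (Fin k)} {x y : V}

theorem IsPartialColoring.inj (h : IsPartialColoring G k χ) {v a b : V} {c : Fin k}
    (ha : χ s(v, a) = some c) (hb : χ s(v, b) = some c) : a = b := by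
  by_contra hab
  refine h.2 s(v, a) s(v, b) ?_ ⟨v, by simp, by simp⟩ c ha hb
  intro h'
  exact hab (Sym2.congr_right.1 h')

theorem IsPartialColoring.diag (h : IsPartialColoring G k χ) (v : V) : χ s(v, v) = none :=
  h.1 _ (by simp)

theorem Fan.nodup {L : List V} (h : Fan χ x y L) : L.Nodup := by
  induction h with
  | base => simp
  | cons w z L c _ hw _ _ ih => exact List.nodup_cons.2 ⟨hw, ih⟩

theorem Fan.suffix {L : List V} (h : Fan χ x y L) : ∀ {b : V} {M : List V}, b :: M <:+ L →
    Fan χ x y (b :: M) := by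
  induction h with
  | base =>
    intro b M hs
    rcases List.suffix_cons_iff.1 hs with h | h
    · rw [h]; exact .base
    · simp at h
  | cons w z L c hf hw h1 h2 ih =>
    intro b M hs
    rcases List.suffix_cons_iff.1 hs with h | h
    · rw [h]; exact .cons w z L c hf hw h1 h2
    · exact ih h

theorem Fan.inv {a b : V} {M : List V} (h : Fan χ x y (a :: b :: M)) :
    a ∉ b :: M ∧ ∃ c, χ s(x, a) = some c ∧ Miss χ b c := by
  cases h with
  | cons _ _ _ c _ hw h1 h2 => exact ⟨hw, c, h1, h2⟩

theorem Fan.notMem (hp : IsPartialColoring G k χ) (hxy : x ≠ y) {L : List V}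
    (h : Fan χ x y L) : x ∉ L := by
  induction h with
  | base => simpa using hxy
  | cons w z L c _ hw h1 _ ih =>
    intro hm
    rcases List.mem_cons.1 hm with rfl | hm
    · rw [hp.diag] at h1; simp at h1
    · exact ih hm

theorem Fan.exists_pair {L : List V} (h : Fan χ x y L) {u : V} (hu : u ∈ L) (huy : u ≠ y) :
    ∃ b M, u :: b :: M <:+ L := by
  induction h with
  | base => simp at hu; exact absurd hu huy
  | cons w z L c _ hw h1 _ ih =>
    rcases List.mem_cons.1 hu with rfl | hm
    · exact ⟨z, L, List.suffix_refl _⟩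
    · obtain ⟨b, M, hs⟩ := ih hm
      exact ⟨b, M, hs.trans (List.suffix_cons _ _)⟩

theorem Fan.congr {L : List V} (h : Fan χ x y L)
    (h1 : ∀ v ∈ L, χ' s(x, v) = χ s(x, v))
    (h2 : ∀ a b M c, a :: b :: M <:+ L → χ s(x, a) = some c → Miss χ b c → Miss χ' b c) :
    Fan χ' x y L := by
  induction h with
  | base => exact .base
  | cons w z L c hf hw hc hm ih =>
    refine .cons w z L c (ih ?_ ?_) hw ?_ ?_
    · intro v hv
      exact h1 v (List.mem_cons_of_mem _ hv)
    · intro a b M c hs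
      exact h2 a b M c (hs.trans (List.suffix_cons _ _))
    · rw [h1 w (by simp), hc]
    · exact h2 w z L c (List.suffix_refl _) hc hm

theorem update_proper [DecidableEq V] (hp : IsPartialColoring G k χ) {w : V} {α : Fin k}
    (hadj : G.Adj x w) (hx : Miss χ x α) (hw : Miss χ w α) :
    IsPartialColoring G k (Function.update χ s(x, w) (some α)) := by
  have key : ∀ f : Sym2 V, ∀ v, v ∈ s(x, w) → v ∈ f → χ f ≠ some α := by
    intro f v hv hf
    obtain ⟨u, rfl⟩ := hf
    rcases Sym2.mem_iff.1 hv with rfl | rfl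
    · exact hx u
    · exact hw u
  constructor
  · intro e he
    have : e ≠ s(x, w) := by rintro rfl; exact he hadj
    rw [Function.update_of_ne this]; exact hp.1 e he
  · rintro e f hne ⟨v, hve, hvf⟩ c hc hc'
    by_cases h1 : e = s(x, w)
    · subst h1
      rw [Function.update_self] at hc
      rw [Function.update_of_ne hne.symm, ← hc] at hc'
      exact key f v hve hvf hc'
    · rw [Function.update_of_ne h1] at hc
      by_cases h2 : f = s(x, w)
      · subst h2
        rw [Function.update_self] at hc'
        rw [← hc'] at hc
        exact key e v hvf hve hc
      · rw [Function.update_of_ne h2] at hc'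
        exact hp.2 e f hne ⟨v, hve, hvf⟩ c hc hc'

theorem rotate [DecidableEq V] (hxy : G.Adj x y) (L : List V) :
    ∀ (χ : Sym2 V → Option (Fin k)) (w : V) (α : Fin k), IsPartialColoring G k χ →
    χ s(x, y) = none →
    Fan χ x y (w :: L) → Miss χ x α → Miss χ w α →
    ∃ χ' : Sym2 V → Option (Fin k), IsPartialColoring G k χ' ∧ χ' s(x, y) ≠ none ∧
      ∀ f : Sym2 V, χ f ≠ none → χ' f ≠ none := by
  induction L with
  | nil =>
    intro χ w α hp hn hf hx hw
    have : w = y := by cases hf; rfl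
    subst this
    refine ⟨_, update_proper hp hxy hx hw, by simp, ?_⟩
    intro f hf
    by_cases h : f = s(x, w)
    · subst h; simp
    · rwa [Function.update_of_ne h]
  | cons z L ih =>
    intro χ w α hp hn hf hx hw
    have hxL := hf.notMem hp hxy.ne
    obtain ⟨hwL, c, hc, hzc⟩ := hf.inv
    have hf' : Fan χ x y (z :: L) := hf.suffix (List.suffix_cons _ _)
    have hadj : G.Adj x w := by
      by_contra h
      rw [hp.1 s(x, w) h] at hc; simp at hc
    have hP := update_proper hp hadj hx hw
    have hwx : w ≠ x := hadj.ne'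
    have hzx : z ≠ x := by rintro rfl; simp at hxL
    have hcα : c ≠ α := by rintro rfl; exact hx w hc
    have hmiss : ∀ v c, v ∈ z :: L → Miss χ v c →
        Miss (Function.update χ s(x, w) (some α)) v c := by
      intro v c hv hm u
      have : s(v, u) ≠ s(x, w) := by
        intro h
        have h' : v ∈ s(x, w) := by rw [← h]; simp
        rcases Sym2.mem_iff.1 h' with rfl | rfl
        · exact hxL (List.mem_cons_of_mem _ hv)
        · exact hwL hv
      rw [Function.update_of_ne this]; exact hm u
    have hne : ∀ v, v ≠ w → s(x, v) ≠ s(x, w) := by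
      intro v hv h
      exact hv (Sym2.congr_right.1 h)
    have hyw : y ≠ w := by rintro rfl; rw [hn] at hc; simp at hc
    obtain ⟨χ', h1, h2, h3⟩ := ih (Function.update χ s(x, w) (some α)) z c hP
      (by rw [Function.update_of_ne (hne y hyw)]; exact hn)
      (hf'.congr (fun v hv => Function.update_of_ne (hne v (by rintro rfl; exact hwL hv)) _ _)
        (fun a b M c hs _ hm => hmiss b c (hs.subset (by simp)) hm))
      (by
        intro u hu
        by_cases huw : u = w
        · subst huw
          rw [Function.update_self] at hu
          exact hcα (Option.some.inj hu).symm
        · rw [Function.update_of_ne (hne u huw)] at hu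
          exact huw (hp.inj hu hc))
      (hmiss z c (by simp) hzc)
    refine ⟨χ', h1, h2, fun f hf => h3 f ?_⟩
    by_cases h : f = s(x, w)
    · subst h; simp
    · rwa [Function.update_of_ne h]

/-- The two-coloured subgraph. -/
def kg (χ : Sym2 V → Option (Fin k)) (α β : Fin k) : SimpleGraph V where
  Adj u v := u ≠ v ∧ (χ s(u, v) = some α ∨ χ s(u, v) = some β)
  symm := ⟨fun u v h => ⟨h.1.symm, by rw [Sym2.eq_swap]; exact h.2⟩⟩
  loopless := ⟨fun u h => h.1 rfl⟩

open Classical in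
/-- Swap on a set. -/
noncomputable def sw (χ : Sym2 V → Option (Fin k)) (α β : Fin k) (C : Set V) :
    Sym2 V → Option (Fin k) :=
  fun e => if ∃ v ∈ e, v ∈ C then (χ e).map (Equiv.swap α β) else χ e

variable {α β : Fin k} {C : Set V}

theorem sw_in {v : V} (hv : v ∈ C) {e : Sym2 V} (he : v ∈ e) :
    sw χ α β C e = (χ e).map (Equiv.swap α β) := by
  unfold sw
  rw [if_pos ⟨v, he, hv⟩]

theorem sw_out (hp : IsPartialColoring G k χ) (hC : ∀ u v, (kg χ α β).Adj u v → u ∈ C → v ∈ C)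
    {v : V} (hv : v ∉ C) {e : Sym2 V} (he : v ∈ e) :
    sw χ α β C e = χ e := by
  unfold sw
  split_ifs with h
  · obtain ⟨u, hu, huC⟩ := h
    have huv : u ≠ v := by rintro rfl; exact hv huC
    have : e = s(u, v) := ((Sym2.mem_and_mem_iff huv).1 ⟨hu, he⟩)
    subst this
    have hn : ¬ (kg χ α β).Adj u v := fun h => hv (hC u v h huC)
    cases hc : χ s(u, v) with
    | none => rfl
    | some c =>
      have h1 : c ≠ α := by rintro rfl; exact hn ⟨huv, Or.inl hc⟩
      have h2 : c ≠ β := by rintro rfl; exact hn ⟨huv, Or.inr hc⟩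
      simp [Equiv.swap_apply_of_ne_of_ne h1 h2]
  · rfl

theorem sw_none (e : Sym2 V) : sw χ α β C e = none ↔ χ e = none := by
  unfold sw
  split_ifs <;> simp

theorem sw_proper (hp : IsPartialColoring G k χ)
    (hC : ∀ u v, (kg χ α β).Adj u v → u ∈ C → v ∈ C) :
    IsPartialColoring G k (sw χ α β C) := by
  refine ⟨fun e he => (sw_none e).2 (hp.1 e he), ?_⟩
  rintro e f hne ⟨v, hve, hvf⟩ c h1 h2
  by_cases hv : v ∈ C
  · rw [sw_in hv hve] at h1
    rw [sw_in hv hvf] at h2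
    obtain ⟨a, ha, ha'⟩ := Option.map_eq_some_iff.1 h1
    obtain ⟨b, hb, hb'⟩ := Option.map_eq_some_iff.1 h2
    have : a = b := (Equiv.swap α β).injective (ha'.trans hb'.symm)
    subst this
    exact hp.2 e f hne ⟨v, hve, hvf⟩ a ha hb
  · rw [sw_out hp hC hv hve] at h1
    rw [sw_out hp hC hv hvf] at h2
    exact hp.2 e f hne ⟨v, hve, hvf⟩ c h1 h2

theorem miss_out (hp : IsPartialColoring G k χ)
    (hC : ∀ u v, (kg χ α β).Adj u v → u ∈ C → v ∈ C) {v : V} (hv : v ∉ C) {c : Fin k}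
    (h : Miss χ v c) : Miss (sw χ α β C) v c := by
  intro w
  rw [sw_out hp hC hv (by simp)]
  exact h w

theorem miss_in {v : V} (hv : v ∈ C) {c : Fin k}
    (h : Miss χ v c) : Miss (sw χ α β C) v (Equiv.swap α β c) := by
  intro w h1
  rw [sw_in hv (by simp)] at h1
  obtain ⟨a, ha, ha'⟩ := Option.map_eq_some_iff.1 h1
  rw [(Equiv.swap α β).injective ha'] at ha
  exact h w ha

theorem miss_ne (hp : IsPartialColoring G k χ)
    (hC : ∀ u v, (kg χ α β).Adj u v → u ∈ C → v ∈ C) {v : V} {c : Fin k}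
    (h1 : c ≠ α) (h2 : c ≠ β)
    (h : Miss χ v c) : Miss (sw χ α β C) v c := by
  by_cases hv : v ∈ C
  · have := miss_in (α := α) (β := β) hv h
    rwa [Equiv.swap_apply_of_ne_of_ne h1 h2] at this
  · exact miss_out hp hC hv h

theorem three [Fintype V] (hp : IsPartialColoring G k χ) {x b w : V}
    (hxb : x ≠ b) (hxw : x ≠ w) (hbw : b ≠ w)
    (hx : Miss χ x α) (hb : Miss χ b β) (hw : Miss χ w β)
    (h1 : (kg χ α β).Reachable x b) (h2 : (kg χ α β).Reachable x w) : False := by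
  classical
  set H := kg χ α β with hH
  let C := H.connectedComponentMk x
  have hconn : C.toSimpleGraph.Connected := C.connected_toSimpleGraph
  have hcard := hconn.card_vert_le_card_edgeSet_add_one
  have hsum := C.toSimpleGraph.sum_degrees_eq_twice_card_edges
  have hxC : x ∈ C := rfl
  have hbC : b ∈ C := (SimpleGraph.ConnectedComponent.eq.2 h1.symm)
  have hwC : w ∈ C := (SimpleGraph.ConnectedComponent.eq.2 h2.symm)
  have hle : ∀ (v : C) (S : Finset (Option (Fin k))),
      (∀ u : V, H.Adj v u → χ s(v.1, u) ∈ S) → C.toSimpleGraph.degree v ≤ S.card := by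
    intro v S hS
    rw [← SimpleGraph.card_neighborFinset_eq_degree]
    apply Finset.card_le_card_of_injOn (fun u => χ s(v.1, u.1))
    · intro u hu
      have hu : C.toSimpleGraph.Adj v u := by simpa using hu
      exact hS u.1 hu
    · intro u hu u' hu' he
      have hu : C.toSimpleGraph.Adj v u := by simpa using hu
      have hu : H.Adj v u := hu
      have he : χ s(v.1, u.1) = χ s(v.1, u'.1) := he
      apply Subtype.ext
      rcases hu.2 with h | h
      · exact hp.inj h (he ▸ h)
      · exact hp.inj h (he ▸ h)
  let T : Finset C := {⟨x, hxC⟩, ⟨b, hbC⟩, ⟨w, hwC⟩}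
  have hT : T.card = 3 := by
    apply Finset.card_eq_three.2
    exact ⟨_, _, _, by simpa using hxb, by simpa using hxw, by simpa using hbw, rfl⟩
  have hdeg : ∀ v : C, C.toSimpleGraph.degree v + (if v ∈ T then 1 else 0) ≤ 2 := by
    intro v
    split_ifs with hv
    · have hv' : Miss χ v.1 α ∨ Miss χ v.1 β := by
        simp only [T, Finset.mem_insert, Finset.mem_singleton] at hv
        rcases hv with rfl | rfl | rfl
        · exact Or.inl hx
        · exact Or.inr hb
        · exact Or.inr hw
      rcases hv' with hm | hm
      · have := hle v {some β} (fun u hu => by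
          rcases hu.2 with h | h
          · exact absurd h (hm u)
          · simpa using h)
        simp at this; omega
      · have := hle v {some α} (fun u hu => by
          rcases hu.2 with h | h
          · simpa using h
          · exact absurd h (hm u))
        simp at this; omega
    · have := hle v {some α, some β} (fun u hu => by
          rcases hu.2 with h | h <;> simp [h])
      have h2 := Finset.card_le_two (a := some α) (b := some β)
      omega
  have hS := Finset.sum_le_sum (fun v (_ : v ∈ Finset.univ) => hdeg v)
  rw [Finset.sum_add_distrib, hsum] at hS
  simp only [Finset.sum_ite_mem, Finset.univ_inter, Finset.sum_const, smul_eq_mul, mul_one,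
    hT, Finset.card_univ] at hS
  rw [Nat.card_eq_fintype_card, Nat.card_eq_fintype_card, ← SimpleGraph.edgeFinset_card] at hcard
  omega

end

theorem exists_miss {V : Type*} [Fintype V]
    (G : SimpleGraph V) [DecidableRel G.Adj]
    (χ : Sym2 V → Option (Fin (G.maxDegree + 1)))
    (hχ : IsPartialColoring G (G.maxDegree + 1) χ) (v : V) : ∃ c, Miss χ v c := by
  by_contra hcon
  simp only [Miss, not_exists, not_forall, not_not] at hcon
  choose g hg using hcon
  have hinj : Function.Injective g := by
    intro a b hab
    have h1 := hg a
    rw [hab, hg b] at h1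
    exact (Option.some.inj h1).symm
  have := Finset.card_le_card_of_injOn (s := Finset.univ) (t := G.neighborFinset v) g
    (by
      intro c _
      have : G.Adj v (g c) := by
        by_contra h
        have h1 := hg c
        rw [hχ.1 s(v, g c) h] at h1
        simp at h1
      simpa using this) hinj.injOn
  have h2 := G.degree_le_maxDegree v
  rw [SimpleGraph.card_neighborFinset_eq_degree] at this
  simp at this
  omega

theorem main_fan {V : Type*} [Fintype V] [DecidableEq V]
    (G : SimpleGraph V) [DecidableRel G.Adj]
    (χ : Sym2 V → Option (Fin (G.maxDegree + 1)))
    (hp : IsPartialColoring G (G.maxDegree + 1) χ) {x y : V} (hxy : G.Adj x y)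
    (hn : χ s(x, y) = none) (n : ℕ) : ∀ (w : V) (L : List V), Fan χ x y (w :: L) →
      Fintype.card V ≤ (w :: L).length + n →
    ∃ χ' : Sym2 V → Option (Fin (G.maxDegree + 1)),
      IsPartialColoring G (G.maxDegree + 1) χ' ∧ χ' s(x, y) ≠ none ∧
      ∀ f : Sym2 V, χ f ≠ none → χ' f ≠ none := by
  obtain ⟨α, hα⟩ := exists_miss G χ hp x
  induction n with
  | zero =>
    intro w L hf hlen
    exfalso
    have h1 := (List.nodup_cons.2 ⟨hf.notMem hp hxy.ne, hf.nodup⟩).length_le_card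
    simp at h1 hlen
    omega
  | succ n ih =>
    intro w L hf hlen
    obtain ⟨β, hβ⟩ := exists_miss G χ hp w
    by_cases hxβ : Miss χ x β
    · exact rotate hxy L χ w β hp hn hf hxβ hβ
    have hxβ' : ∃ u, χ s(x, u) = some β := by
      simpa [Miss] using hxβ
    obtain ⟨u, hu⟩ := hxβ'
    by_cases huL : u ∈ w :: L
    swap
    · apply ih u (w :: L) (.cons u w L β hf huL hu hβ)
      simp at hlen ⊢
      omega
    have huy : u ≠ y := by rintro rfl; rw [hn] at hu; simp at hu
    obtain ⟨b₀, M₀, hs₀⟩ := hf.exists_pair huL huy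
    have hxL := hf.notMem hp hxy.ne
    have hcl : ∀ r : V, ∀ p q, (kg χ α β).Adj p q → p ∈ {v | (kg χ α β).Reachable r v} →
        q ∈ {v | (kg χ α β).Reachable r v} := fun r p q h hr => hr.trans h.reachable
    have hpair : ∀ a b M, a :: b :: M <:+ w :: L → χ s(x, a) = some β → Miss χ b β := by
      intro a b M hs ha
      obtain ⟨_, c, hc, hm⟩ := (hf.suffix hs).inv
      rw [ha] at hc
      exact (Option.some.inj hc) ▸ hm
    have fin : ∀ (r : V) (M : List V), r :: M <:+ w :: L → ¬ (kg χ α β).Reachable x r →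
        Miss χ r β →
        (∀ a b M', a :: b :: M' <:+ r :: M → χ s(x, a) = some β →
          ¬ (kg χ α β).Reachable r b) →
        ∃ χ' : Sym2 V → Option (Fin (G.maxDegree + 1)),
          IsPartialColoring G (G.maxDegree + 1) χ' ∧ χ' s(x, y) ≠ none ∧
          ∀ f : Sym2 V, χ f ≠ none → χ' f ≠ none := by
      intro r M hs hr hrβ hab
      have hxC : x ∉ {v | (kg χ α β).Reachable r v} := fun h => hr h.symm
      obtain ⟨χ', h1, h2, h3⟩ := rotate hxy M
        (sw χ α β {v | (kg χ α β).Reachable r v}) r α (sw_proper hp (hcl r))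
        ((sw_none _).2 hn)
        ((hf.suffix hs).congr (fun v hv => sw_out hp (hcl r) hxC (by simp)) (by
          intro a b M' c hs' hc hm
          have hcα : c ≠ α := by rintro rfl; exact hα a hc
          by_cases hcβ : c = β
          · subst hcβ
            exact miss_out hp (hcl r) (hab a b M' hs' hc) hm
          · exact miss_ne hp (hcl r) hcα hcβ hm))
        (miss_out hp (hcl r) hxC hα)
        (by
          have := miss_in (χ := χ) (α := α) (β := β) (C := {v | (kg χ α β).Reachable r v})
            (v := r) (SimpleGraph.Reachable.refl r) hrβ
          rwa [Equiv.swap_apply_right] at this)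
      exact ⟨χ', h1, h2, fun f hf => h3 f (fun h => hf ((sw_none f).1 h))⟩
    by_cases hcase : ∃ a b M, a :: b :: M <:+ w :: L ∧ χ s(x, a) = some β ∧
        ¬ (kg χ α β).Reachable x b
    · obtain ⟨a, b, M, hs, ha, hr⟩ := hcase
      refine fin b M ((List.suffix_cons _ _).trans hs) hr (hpair a b M hs ha) ?_
      intro a' b' M' hs' ha'
      exfalso
      have h1 := hp.inj ha ha'
      subst h1
      exact (hf.suffix hs).inv.1 (hs'.subset (by simp))
    · push Not at hcase
      have hwr : ¬ (kg χ α β).Reachable x w := by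
        intro hr
        have hb := hcase u b₀ M₀ hs₀ hu
        refine three hp (x := x) (b := b₀) (w := w) ?_ ?_ ?_ hα (hpair u b₀ M₀ hs₀ hu) hβ hb hr
        · rintro rfl; exact hxL (hs₀.subset (by simp))
        · rintro rfl; simp at hxL
        · rintro rfl
          have hnd := hf.nodup
          rcases List.suffix_cons_iff.1 hs₀ with h | h
          · injection h with h1 h2
            rw [← h2] at hnd
            simp at hnd
          · exact (List.nodup_cons.1 hnd).1 (h.subset (by simp))
      refine fin w L (List.suffix_refl _) hwr hβ ?_
      intro a b M hs ha h
      exact hwr ((hcase a b M hs ha).trans h.symm)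

/-- Let `χ` be a partial `(Δ+1)`-edge-coloring of `G` and let `e` be an uncolored edge of `G`.
Then there exists a partial `(Δ+1)`-edge-coloring `χ'` of `G` in which `e` is colored and every
edge colored by `χ` is also colored by `χ'`. -/
theorem extend_partial_coloring {V : Type*} [Fintype V] [DecidableEq V]
    (G : SimpleGraph V) [DecidableRel G.Adj]
    (χ : Sym2 V → Option (Fin (G.maxDegree + 1)))
    (hχ : IsPartialColoring G (G.maxDegree + 1) χ)
    (e : Sym2 V) (he : e ∈ G.edgeSet) (hun : χ e = none) :
    ∃ χ' : Sym2 V → Option (Fin (G.maxDegree + 1)),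
      IsPartialColoring G (G.maxDegree + 1) χ' ∧ χ' e ≠ none ∧
      ∀ f : Sym2 V, χ f ≠ none → χ' f ≠ none := by
  induction e with
  | h x y =>
    exact main_fan G χ hχ he hun (Fintype.card V) y [] .base (by simp)

end EC
end

section
/- Let χ be a partial (Δ+1)-edge-coloring of G and let (v,x₀) be an uncolored edge. Then there exist a fan F = (v, x₀, …, x_t) with respect to χ and a color c₁ ∈ M(x_t) such that F is primed by c₁. -/
namespace EC

/-- The set `M(v)` of missing colors at a vertex `v`. -/
def missing {V : Type*} {k : ℕ} (χ : Sym2 V → Option (Fin k)) (v : V) : Set (Fin k) :=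
  {c | ∀ w : V, χ s(v, w) ≠ some c}

/-- A fan `F = (v, x 0, …, x t)` with respect to `χ`: the `x i` (for `i ≤ t`) are distinct
neighbors of `v`, the edge `(v, x 0)` is uncolored, the edge `(v, x i)` is colored for
`1 ≤ i ≤ t`, and its color is missing at `x (i-1)`. -/
def IsFan {V : Type*} (G : SimpleGraph V) {k : ℕ} (χ : Sym2 V → Option (Fin k))
    (v : V) (t : ℕ) (x : ℕ → V) : Prop :=
  (∀ i ≤ t, G.Adj v (x i)) ∧
  (∀ i ≤ t, ∀ j ≤ t, x i = x j → i = j) ∧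
  χ s(v, x 0) = none ∧
  (∀ i, 1 ≤ i → i ≤ t → χ s(v, x i) ≠ none ∧
    ∀ c : Fin k, χ s(v, x i) = some c → c ∈ missing χ (x (i - 1)))

/-- The fan `F = (v, x 0, …, x t)` is primed by the color `c₁` if `c₁ ∈ M(x t)` and either
`c₁ ∈ M(v)` or `c₁ ∈ M(x j)` for some `j < t`. -/
def Primed {V : Type*} {k : ℕ} (χ : Sym2 V → Option (Fin k))
    (v : V) (t : ℕ) (x : ℕ → V) (c₁ : Fin k) : Prop :=
  c₁ ∈ missing χ (x t) ∧ (c₁ ∈ missing χ v ∨ ∃ j < t, c₁ ∈ missing χ (x j))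

theorem missing_nonempty {V : Type*} [Fintype V] [DecidableEq V]
    (G : SimpleGraph V) [DecidableRel G.Adj]
    (χ : Sym2 V → Option (Fin (G.maxDegree + 1)))
    (hχ : IsPartialColoring G (G.maxDegree + 1) χ) (u : V) :
    ∃ c, c ∈ missing χ u := by
  by_contra h
  have h' : ∀ c, ∃ w, χ s(u, w) = some c := by
    intro c
    by_contra hc
    exact h ⟨c, fun w hw => hc ⟨w, hw⟩⟩
  choose f hf using h'
  have hinj : Function.Injective f := by
    intro a b hab
    have h1 := hf a
    rw [hab, hf b] at h1
    exact (Option.some.inj h1).symm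
  have hsub : Finset.univ.image f ⊆ G.neighborFinset u := by
    intro w hw
    obtain ⟨c, -, rfl⟩ := Finset.mem_image.1 hw
    rw [SimpleGraph.mem_neighborFinset]
    by_contra hn
    have := hχ.1 s(u, f c) (by simpa using hn)
    rw [hf c] at this
    cases this
  have hc := Finset.card_le_card hsub
  rw [Finset.card_image_of_injective _ hinj, Finset.card_univ, Fintype.card_fin,
    SimpleGraph.card_neighborFinset_eq_degree] at hc
  have := G.degree_le_maxDegree u
  omega

/-- Given a partial `(Δ+1)`-edge-coloring `χ` of `G` and an uncolored edge `(v, x₀)`, there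
exist a fan `F = (v, x₀, …, x_t)` with respect to `χ` and a color `c₁ ∈ M(x_t)` such that `F`
is primed by `c₁`. -/
theorem exists_primed_fan {V : Type*} [Fintype V] [DecidableEq V]
    (G : SimpleGraph V) [DecidableRel G.Adj]
    (χ : Sym2 V → Option (Fin (G.maxDegree + 1)))
    (hχ : IsPartialColoring G (G.maxDegree + 1) χ)
    (v x₀ : V) (hadj : G.Adj v x₀) (hun : χ s(v, x₀) = none) :
    ∃ (t : ℕ) (x : ℕ → V) (c₁ : Fin (G.maxDegree + 1)),
      x 0 = x₀ ∧ IsFan G χ v t x ∧ Primed χ v t x c₁ := by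
  by_contra hno
  have key : ∀ t : ℕ, ∃ x : ℕ → V, x 0 = x₀ ∧ IsFan G χ v t x := by
    intro t
    induction t with
    | zero =>
      refine ⟨fun _ => x₀, rfl, fun _ _ => hadj, ?_, hun, ?_⟩
      · intro i hi j hj _
        omega
      · intro i h1 h2
        omega
    | succ t ih =>
      obtain ⟨x, hx0, hF⟩ := ih
      obtain ⟨c, hc⟩ := missing_nonempty G χ hχ (x t)
      have hnp : ¬ Primed χ v t x c := fun hp => hno ⟨t, x, c, hx0, hF, hp⟩
      have hcv : ∃ w, χ s(v, w) = some c := by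
        by_contra hcv
        exact hnp ⟨hc, Or.inl fun w hw => hcv ⟨w, hw⟩⟩
      obtain ⟨w, hw⟩ := hcv
      obtain ⟨hA, hD, hU, hC⟩ := hF
      have hne : ∀ i ≤ t, x i ≠ w := by
        rintro i hi rfl
        rcases Nat.eq_zero_or_pos i with rfl | hpos
        · rw [hU] at hw
          cases hw
        · exact hnp ⟨hc, Or.inr ⟨i - 1, by omega, (hC i hpos hi).2 c hw⟩⟩
      have hvw : G.Adj v w := by
        by_contra hn
        have := hχ.1 s(v, w) (by simpa using hn)
        rw [hw] at this
        cases this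
      have hy : ∀ i ≤ t, (fun i => if i ≤ t then x i else w) i = x i := by
        intro i hi
        simp [hi]
      have hyt : (fun i => if i ≤ t then x i else w) (t + 1) = w := by simp
      generalize (fun i => if i ≤ t then x i else w) = y at hy hyt
      have hcase : ∀ i ≤ t + 1, i ≤ t ∨ i = t + 1 := fun i hi => by omega
      refine ⟨y, by rw [hy 0 (Nat.zero_le _), hx0], ?_, ?_, ?_, ?_⟩
      · intro i hi
        rcases hcase i hi with h | rfl
        · rw [hy i h]; exact hA i h
        · rw [hyt]; exact hvw
      · intro i hi j hj hij
        rcases hcase i hi with h | rfl <;> rcases hcase j hj with h' | rfl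
        · rw [hy i h, hy j h'] at hij
          exact hD i h j h' hij
        · rw [hy i h, hyt] at hij
          exact (hne i h hij).elim
        · rw [hy j h', hyt] at hij
          exact (hne j h' hij.symm).elim
        · rfl
      · rw [hy 0 (Nat.zero_le _)]; exact hU
      · intro i h1 hi
        rcases hcase i hi with h | rfl
        · rw [hy i h, hy (i - 1) (by omega)]; exact hC i h1 h
        · rw [hyt, Nat.add_sub_cancel, hy t le_rfl, hw]
          refine ⟨by simp, ?_⟩
          intro d hd
          cases hd
          exact hc
  obtain ⟨x, -, -, hD, -⟩ := key (Fintype.card V)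
  have := Fintype.card_le_of_injective (fun i : Fin (Fintype.card V + 1) => x i) (by
    intro i j hij
    exact Fin.ext (hD i (by omega) j (by omega) hij))
  rw [Fintype.card_fin] at this
  omega

end EC
end

section
/- Let χ be a partial k-edge-coloring of G, let F = (v, x₀, …, x_t) be a fan with respect to χ, write c_i = χ(v,x_i) for i ∈ {1,…,t}, and fix j ∈ {1,…,t}. Define χ' by χ'(v,x_{i−1}) = c_i for every i ∈ {1,…,j}, χ'(v,x_j) = ⊥, and χ' = χ on all other edges (this is the shift of F from x_j). Then χ' is a partial k-edge-coloring of G, the edge (v,x_j) is uncolored under χ', and the set M(v) of missing colors at v is the same under χ and χ'. -/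
namespace EC

/-- Shifting a fan from `x j` preserves the validity of the coloring: if `χ'` is obtained
from `χ` by setting `χ'(v, x (i-1)) = χ(v, x i)` for `1 ≤ i ≤ j`, uncoloring `(v, x j)` and
leaving all other edges unchanged, then `χ'` is a partial `k`-edge-coloring, the edge
`(v, x j)` is uncolored under `χ'`, and the set of missing colors at `v` is unchanged. -/
theorem fan_shift {V : Type*} [Fintype V] [DecidableEq V]
    (G : SimpleGraph V) {k : ℕ}
    (χ χ' : Sym2 V → Option (Fin k))
    (hχ : IsPartialColoring G k χ)
    (v : V) (t : ℕ) (x : ℕ → V) (hF : IsFan G χ v t x)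
    (j : ℕ) (hj1 : 1 ≤ j) (hjt : j ≤ t)
    (h1 : ∀ i, 1 ≤ i → i ≤ j → χ' s(v, x (i - 1)) = χ s(v, x i))
    (h2 : χ' s(v, x j) = none)
    (h3 : ∀ e : Sym2 V, (∀ i ≤ j, e ≠ s(v, x i)) → χ' e = χ e) :
    IsPartialColoring G k χ' ∧ χ' s(v, x j) = none ∧ missing χ' v = missing χ v := by
  obtain ⟨hχ1, hχ2⟩ := hχ
  obtain ⟨hadj, hinj, h0, hfan⟩ := hF
  have key : ∀ e c, χ' e = some c → (χ e = some c ∧ ∀ i ≤ j, e ≠ s(v, x i)) ∨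
      ∃ i, 1 ≤ i ∧ i ≤ j ∧ e = s(v, x (i - 1)) ∧ χ s(v, x i) = some c := by
    intro e c hc
    by_cases h : ∀ i ≤ j, e ≠ s(v, x i)
    · left
      exact ⟨by rw [← h3 e h]; exact hc, h⟩
    · right
      push Not at h
      obtain ⟨i, hi, rfl⟩ := h
      rcases Nat.lt_or_ge i j with hij | hij
      · have := h1 (i + 1) (by omega) (by omega)
        simp only [Nat.add_sub_cancel] at this
        exact ⟨i + 1, by omega, by omega, by simp, by rw [← this]; exact hc⟩
      · have : i = j := by omega
        subst this
        rw [h2] at hc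
        exact absurd hc (by simp)
  have hAB : ∀ e c, χ e = some c → (∀ i ≤ j, e ≠ s(v, x i)) → ∀ i, 1 ≤ i → i ≤ j →
      χ s(v, x i) = some c → ∀ u, u ∈ e → u ∈ s(v, x (i - 1)) → False := by
    intro e c he hne i hi1 hij hc u hue huf
    rcases Sym2.mem_iff.1 huf with rfl | rfl
    · exact hχ2 e _ (hne i hij) ⟨u, hue, Sym2.mem_mk_left _ _⟩ c he hc
    · obtain ⟨w, rfl⟩ := hue
      exact (hfan i hi1 (hij.trans hjt)).2 c hc w he
  refine ⟨⟨?_, ?_⟩, h2, ?_⟩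
  · intro e he
    by_contra hn
    obtain ⟨c, hc⟩ := Option.ne_none_iff_exists'.1 hn
    rcases key e c hc with ⟨h, -⟩ | ⟨i, hi1, hij, rfl, -⟩
    · rw [hχ1 e he] at h
      exact absurd h (by simp)
    · exact he (hadj (i - 1) (by omega))
  · rintro e f hef ⟨u, hue, huf⟩ c hce hcf
    rcases key e c hce with ⟨he, hne⟩ | ⟨i, hi1, hij, rfl, he⟩
    · rcases key f c hcf with ⟨hf, hnf⟩ | ⟨i', hi1', hij', rfl, hf⟩
      · exact hχ2 e f hef ⟨u, hue, huf⟩ c he hf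
      · exact hAB e c he hne i' hi1' hij' hf u hue huf
    · rcases key f c hcf with ⟨hf, hnf⟩ | ⟨i', hi1', hij', rfl, hf⟩
      · exact hAB f c hf hnf i hi1 hij he u huf hue
      · refine hχ2 s(v, x i) s(v, x i') ?_ ⟨v, Sym2.mem_mk_left _ _, Sym2.mem_mk_left _ _⟩ c he hf
        intro h
        have := hinj i (by omega) i' (by omega) (Sym2.congr_right.1 h)
        subst this
        exact hef rfl
  · ext c
    constructor
    · intro hm w hw
      by_cases h : ∀ i ≤ j, s(v, w) ≠ s(v, x i)
      · exact hm w (by rw [h3 _ h]; exact hw)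
      · push Not at h
        obtain ⟨i, hi, h⟩ := h
        rw [h] at hw
        rcases Nat.eq_zero_or_pos i with rfl | hpos
        · rw [h0] at hw
          exact absurd hw (by simp)
        · exact hm (x (i - 1)) (by rw [h1 i hpos hi]; exact hw)
    · intro hm w hw
      rcases key _ c hw with ⟨h, -⟩ | ⟨i, -, -, -, h⟩
      · exact hm w h
      · exact hm _ h

end EC
end

section
/- Let χ be a partial k-edge-coloring of G, let c₀, c₁ ∈ {1,…,k} be distinct colors, and let P be a maximal (c₀,c₁)-alternating path. Define χ' by swapping the colors c₀ and c₁ on the edges of P (every edge of P colored c₀ gets color c₁ and vice versa) and χ' = χ on all other edges. Then χ' is a partial k-edge-coloring of G. Moreover, if v is an endpoint of P whose unique P-edge is colored c₀ under χ, then c₀ ∈ M(v) under χ' and c₁ ∉ M(v) under χ'. -/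
namespace EC

/-- A maximal `(c₀,c₁)`-alternating path: a simple path with distinct endpoints all of whose
edges are colored `c₀` or `c₁`, such that each of its two endpoint vertices is incident to
exactly one edge colored `c₀` or `c₁`. -/
def IsMaxAltPath {V : Type*} (G : SimpleGraph V) {k : ℕ} (χ : Sym2 V → Option (Fin k))
    (c₀ c₁ : Fin k) {a b : V} (p : G.Walk a b) : Prop :=
  p.IsPath ∧ a ≠ b ∧
  (∀ e ∈ p.edges, χ e = some c₀ ∨ χ e = some c₁) ∧
  (∃! w : V, χ s(a, w) = some c₀ ∨ χ s(a, w) = some c₁) ∧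
  (∃! w : V, χ s(b, w) = some c₀ ∨ χ s(b, w) = some c₁)

theorem exists_two {V : Type*} {G : SimpleGraph V} {a b : V} (p : G.Walk a b) (hp : p.IsPath)
    (v : V) (hv : v ∈ p.support) (hva : v ≠ a) (hvb : v ≠ b) :
    ∃ x y, x ≠ y ∧ s(v, x) ∈ p.edges ∧ s(v, y) ∈ p.edges := by
  induction p with
  | nil => simp at hv; exact absurd hv hva
  | @cons a u b h q ih =>
    rw [SimpleGraph.Walk.cons_isPath_iff] at hp
    rw [SimpleGraph.Walk.support_cons, List.mem_cons] at hv
    have hv' := hv.resolve_left hva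
    by_cases hvu : v = u
    · subst hvu
      cases q with
      | nil => exact absurd rfl hvb
      | @cons _ w _ h' q' =>
        refine ⟨a, w, ?_, ?_, ?_⟩
        · rintro rfl
          exact hp.2 (by simp)
        · simp [Sym2.eq_swap]
        · simp
    · obtain ⟨x, y, hxy, h1, h2⟩ := ih hp.1 hv' hvu hvb
      exact ⟨x, y, hxy, by simp [h1], by simp [h2]⟩

theorem exists_first {V : Type*} {G : SimpleGraph V} {a b : V} (p : G.Walk a b) (hab : a ≠ b) :
    ∃ x, s(a, x) ∈ p.edges := by
  cases p with
  | nil => exact absurd rfl hab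
  | @cons _ w _ h q => exact ⟨w, by simp⟩

/-- Flipping a maximal `(c₀,c₁)`-alternating path `P` (swapping the colors `c₀` and `c₁` on
the edges of `P` and leaving all other edges unchanged) yields a partial `k`-edge-coloring.
Moreover, for an endpoint of `P` whose unique `P`-edge is colored `c₀` under `χ`, after the
flip the color `c₀` is missing at that endpoint and `c₁` is not. -/
theorem path_flip {V : Type*} [Fintype V] [DecidableEq V]
    (G : SimpleGraph V) {k : ℕ}
    (χ : Sym2 V → Option (Fin k)) (hχ : IsPartialColoring G k χ)
    (c₀ c₁ : Fin k) (hc : c₀ ≠ c₁) {a b : V} (p : G.Walk a b)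
    (hp : IsMaxAltPath G χ c₀ c₁ p)
    (χ' : Sym2 V → Option (Fin k))
    (hχ' : χ' = fun e =>
      if e ∈ p.edges then (if χ e = some c₀ then some c₁ else some c₀) else χ e) :
    IsPartialColoring G k χ' ∧
    ((∀ e ∈ p.edges, a ∈ e → χ e = some c₀) →
      c₀ ∈ missing χ' a ∧ c₁ ∉ missing χ' a) ∧
    ((∀ e ∈ p.edges, b ∈ e → χ e = some c₀) →
      c₀ ∈ missing χ' b ∧ c₁ ∉ missing χ' b) := by
  obtain ⟨hpath, hab, hcol, ha, hb⟩ := hp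
  obtain ⟨hχ0, hχ1⟩ := hχ
  have ea := exists_first p hab
  have eb : ∃ x, s(b, x) ∈ p.edges := by
    obtain ⟨x, hx⟩ := exists_first p.reverse hab.symm
    exact ⟨x, by simpa using hx⟩
  -- closure at an endpoint
  have hend : ∀ v : V, (∃! w : V, χ s(v, w) = some c₀ ∨ χ s(v, w) = some c₁) →
      (∃ x, s(v, x) ∈ p.edges) → ∀ w, (χ s(v, w) = some c₀ ∨ χ s(v, w) = some c₁) →
      s(v, w) ∈ p.edges := by
    rintro v hu ⟨x, hx⟩ w hw
    rw [hu.unique hw (hcol _ hx)]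
    exact hx
  have hclos : ∀ e ∈ p.edges, ∀ f : Sym2 V, ∀ v, v ∈ e → v ∈ f →
      (χ f = some c₀ ∨ χ f = some c₁) → f ∈ p.edges := by
    intro e he f v hve hvf hf
    obtain ⟨w, rfl⟩ := Sym2.mem_iff_exists.mp hvf
    by_cases hva : v = a
    · subst hva; exact hend _ ha ea w hf
    by_cases hvb : v = b
    · subst hvb; exact hend _ hb eb w hf
    have hvs : v ∈ p.support := by
      obtain ⟨u, rfl⟩ := Sym2.mem_iff_exists.mp hve
      exact p.fst_mem_support_of_mem_edges he
    obtain ⟨x, y, hxy, hx, hy⟩ := exists_two p hpath v hvs hva hvb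
    by_contra hn
    have n1 : s(v, x) ≠ s(v, w) := fun h => hn (h ▸ hx)
    have n2 : s(v, y) ≠ s(v, w) := fun h => hn (h ▸ hy)
    have n3 : s(v, x) ≠ s(v, y) := fun h => hxy (Sym2.congr_right.mp h)
    have k1 := hχ1 _ _ n1 ⟨v, by simp, by simp⟩
    have k2 := hχ1 _ _ n2 ⟨v, by simp, by simp⟩
    have k3 := hχ1 _ _ n3 ⟨v, by simp, by simp⟩
    have := hcol _ hx
    have := hcol _ hy
    grind
  have hfin : ∀ v : V, (∃! w : V, χ s(v, w) = some c₀ ∨ χ s(v, w) = some c₁) →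
      (∃ x, s(v, x) ∈ p.edges) → (∀ e ∈ p.edges, v ∈ e → χ e = some c₀) →
      c₀ ∈ missing χ' v ∧ c₁ ∉ missing χ' v := by
    intro v hu hx h0
    have hend' := hend v hu hx
    obtain ⟨x, hx⟩ := hx
    constructor
    · intro w hw
      rw [hχ'] at hw
      by_cases hm : s(v, w) ∈ p.edges
      · simp only [hm, if_true, h0 _ hm (by simp)] at hw
        exact hc (Option.some.inj hw).symm
      · simp only [hm, if_false] at hw
        exact hm (hend' w (Or.inl hw))
    · intro h
      apply h x
      rw [hχ']
      simp [hx, h0 _ hx (by simp)]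
  refine ⟨⟨?_, ?_⟩, hfin a ha ea, hfin b hb eb⟩
  · intro e he
    have hm : e ∉ p.edges := fun h => he (p.edges_subset_edgeSet h)
    rw [hχ']
    simp [hm, hχ0 e he]
  · rintro e f hef ⟨v, hve, hvf⟩ c h1 h2
    have k1 := hχ1 e f hef ⟨v, hve, hvf⟩
    have e1 := hcol e
    have e2 := hcol f
    have e3 := fun h => hclos e h f v hve hvf
    have e4 := fun h => hclos f h e v hvf hve
    simp only [hχ'] at h1 h2
    clear hχ' hfin hclos hend hcol hχ1 hχ0
    grind

end EC
end

section
/- Let χ be a partial k-edge-coloring of G and let e = (u,v) be a colored edge. Then the number of maximal alternating paths (over all pairs of distinct colors in {1,…,k}) in which e is an internal edge is at most w(e) = min(d(u), d(v)). -/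
namespace EC

/-- `x = (q, S)` represents a maximal alternating path of `G` under `χ`: `q` is an unordered
pair of distinct colors `{c₀, c₁}` and `S` is the edge set of a maximal `(c₀,c₁)`-alternating
path of `G`, together with the witness `e` being an internal edge of that path (i.e. `e` lies
on the path and neither endpoint of `e` is an endpoint of the path). -/
def IsMaxAltPathPairInternal {V : Type*} [DecidableEq V] (G : SimpleGraph V) {k : ℕ}
    (χ : Sym2 V → Option (Fin k)) (q : Sym2 (Fin k)) (S : Finset (Sym2 V))
    (e : Sym2 V) : Prop :=
  ∃ (c₀ c₁ : Fin k) (a b : V) (p : G.Walk a b),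
    c₀ ≠ c₁ ∧ q = s(c₀, c₁) ∧ IsMaxAltPath G χ c₀ c₁ p ∧ S = p.edges.toFinset ∧
    e ∈ p.edges ∧ a ∉ e ∧ b ∉ e

theorem two_edges {V : Type*} {G : SimpleGraph V} {a b : V} (p : G.Walk a b) (hp : p.IsPath)
    (x : V) (hx : x ∈ p.support) (hxa : x ≠ a) (hxb : x ≠ b) :
    ∃ y z, y ≠ z ∧ s(x, y) ∈ p.edges ∧ s(x, z) ∈ p.edges := by
  induction p with
  | nil => simp at hx; exact absurd hx hxa
  | @cons a c b h p ih =>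
    rw [SimpleGraph.Walk.cons_isPath_iff] at hp
    rw [SimpleGraph.Walk.support_cons, List.mem_cons] at hx
    have hx' := hx.resolve_left hxa
    by_cases hxc : x = c
    · subst hxc
      cases p with
      | nil => exact absurd rfl hxb
      | @cons _ d _ h' p' =>
        refine ⟨a, d, ?_, by simp [Sym2.eq_swap], by simp⟩
        rintro rfl
        exact hp.2 (by simp)
    · obtain ⟨y, z, h1, h2, h3⟩ := ih hp.1 hx' hxc hxb
      exact ⟨y, z, h1, by simp [h2], by simp [h3]⟩

theorem first_edge {V : Type*} {G : SimpleGraph V} {a b : V} (p : G.Walk a b) (hab : a ≠ b) :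
    ∃ y, s(a, y) ∈ p.edges := by
  cases p with
  | nil => exact absurd rfl hab
  | @cons _ d _ h' p' => exact ⟨d, by simp⟩

theorem last_edge {V : Type*} {G : SimpleGraph V} {a b : V} (p : G.Walk a b) (hab : a ≠ b) :
    ∃ y, s(b, y) ∈ p.edges := by
  obtain ⟨y, hy⟩ := first_edge p.reverse hab.symm
  exact ⟨y, by simpa using hy⟩

theorem inj_at {V : Type*} {G : SimpleGraph V} {k : ℕ}
    {χ : Sym2 V → Option (Fin k)} (hχ : IsPartialColoring G k χ) {x y z : V} {c : Fin k}
    (h1 : χ s(x, y) = some c) (h2 : χ s(x, z) = some c) : y = z := by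
  by_contra hne
  exact hχ.2 s(x, y) s(x, z) (fun h => hne (Sym2.congr_right.1 h)) ⟨x, by simp, by simp⟩ c h1 h2

theorem closed {V : Type*} {G : SimpleGraph V} {k : ℕ}
    {χ : Sym2 V → Option (Fin k)} (hχ : IsPartialColoring G k χ) {c₀ c₁ : Fin k}
    {a b : V} {p : G.Walk a b} (hp : IsMaxAltPath G χ c₀ c₁ p) {x y : V} (hx : x ∈ p.support)
    (hy : χ s(x, y) = some c₀ ∨ χ s(x, y) = some c₁) : s(x, y) ∈ p.edges := by
  obtain ⟨hpath, hab, hc, ha, hb⟩ := hp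
  by_cases hxa : x = a
  · subst hxa
    obtain ⟨z, hz⟩ := first_edge p hab
    rwa [ha.unique hy (hc _ hz)]
  by_cases hxb : x = b
  · subst hxb
    obtain ⟨z, hz⟩ := last_edge p hab
    rwa [hb.unique hy (hc _ hz)]
  obtain ⟨z, w, hne, hz, hw⟩ := two_edges p hpath x hx hxa hxb
  rcases hy with hy | hy <;> rcases hc _ hz with h1 | h1 <;> rcases hc _ hw with h2 | h2 <;>
    first
    | exact absurd (inj_at hχ h1 h2) hne
    | (rw [inj_at hχ hy h1]; exact hz)
    | (rw [inj_at hχ hy h2]; exact hw)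

theorem sub_of_start {V : Type*} {G : SimpleGraph V} {k : ℕ}
    {χ : Sym2 V → Option (Fin k)} (hχ : IsPartialColoring G k χ) {c₀ c₁ : Fin k}
    {a b : V} {p : G.Walk a b} (hp : IsMaxAltPath G χ c₀ c₁ p) {s t : V} (r : G.Walk s t)
    (hr : ∀ e ∈ r.edges, χ e = some c₀ ∨ χ e = some c₁) (hs : s ∈ p.support) :
    ∀ e ∈ r.edges, e ∈ p.edges := by
  induction r with
  | nil => simp
  | @cons s d t h r ih =>
    have h1 : s(s, d) ∈ p.edges := closed hχ hp hs (hr _ (by simp))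
    have h2 : d ∈ p.support := p.snd_mem_support_of_mem_edges h1
    intro e he
    rw [SimpleGraph.Walk.edges_cons, List.mem_cons] at he
    rcases he with rfl | he
    · exact h1
    · exact ih (fun e he => hr e (by simp [he])) h2 e he

theorem sub_of_mem {V : Type*} [DecidableEq V] {G : SimpleGraph V} {k : ℕ}
    {χ : Sym2 V → Option (Fin k)} (hχ : IsPartialColoring G k χ) {c₀ c₁ : Fin k}
    {a b : V} {p : G.Walk a b} (hp : IsMaxAltPath G χ c₀ c₁ p) {s t : V} (r : G.Walk s t)
    (hr : ∀ e ∈ r.edges, χ e = some c₀ ∨ χ e = some c₁) {z : V} (hz : z ∈ p.support)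
    (hz' : z ∈ r.support) : ∀ e ∈ r.edges, e ∈ p.edges := by
  intro e he
  have h0 : (r.takeUntil z hz').edges ++ (r.dropUntil z hz').edges = r.edges := by
    rw [← SimpleGraph.Walk.edges_append, SimpleGraph.Walk.take_spec]
  have he' := he
  rw [← h0, List.mem_append] at he'
  rcases he' with h | h
  · refine sub_of_start hχ hp (r.takeUntil z hz').reverse ?_ hz e (by simpa using h)
    intro f hf
    apply hr
    rw [← h0, List.mem_append]
    left; simpa using hf
  · refine sub_of_start hχ hp (r.dropUntil z hz') ?_ hz e h
    intro f hf
    apply hr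
    rw [← h0, List.mem_append]
    exact Or.inr hf

theorem altSymm {V : Type*} {G : SimpleGraph V} {k : ℕ}
    {χ : Sym2 V → Option (Fin k)} {c₀ c₁ : Fin k}
    {a b : V} {p : G.Walk a b} (hp : IsMaxAltPath G χ c₀ c₁ p) : IsMaxAltPath G χ c₁ c₀ p := by
  obtain ⟨h1, h2, h3, h4, h5⟩ := hp
  refine ⟨h1, h2, fun e he => (h3 e he).symm, ?_, ?_⟩
  · simpa only [or_comm] using h4
  · simpa only [or_comm] using h5

theorem uniq {V : Type*} [DecidableEq V] {G : SimpleGraph V} {k : ℕ}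
    {χ : Sym2 V → Option (Fin k)} (hχ : IsPartialColoring G k χ) {q : Sym2 (Fin k)}
    {S T : Finset (Sym2 V)} {u v : V}
    (h1 : IsMaxAltPathPairInternal G χ q S s(u, v))
    (h2 : IsMaxAltPathPairInternal G χ q T s(u, v)) : S = T := by
  obtain ⟨c₀, c₁, a, b, p, hc, rfl, hp, rfl, he, -, -⟩ := h1
  obtain ⟨d₀, d₁, a', b', p', -, hq, hp', rfl, he', -, -⟩ := h2
  have hp'' : IsMaxAltPath G χ c₀ c₁ p' := by
    rcases Sym2.eq_iff.1 hq with ⟨rfl, rfl⟩ | ⟨rfl, rfl⟩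
    · exact hp'
    · exact altSymm hp'
  have hu := p.fst_mem_support_of_mem_edges he
  have hu' := p'.fst_mem_support_of_mem_edges he'
  ext f
  rw [List.mem_toFinset, List.mem_toFinset]
  exact ⟨sub_of_mem hχ hp'' p hp.2.2.1 hu' hu f, sub_of_mem hχ hp p' hp''.2.2.1 hu hu' f⟩

theorem exists_nbr {V : Type*} [DecidableEq V] {G : SimpleGraph V} {k : ℕ}
    {χ : Sym2 V → Option (Fin k)} (hχ : IsPartialColoring G k χ) {q : Sym2 (Fin k)}
    {S : Finset (Sym2 V)} {u v : V}
    (h1 : IsMaxAltPathPairInternal G χ q S s(u, v)) :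
    ∃ w, G.Adj u w ∧ ∃ c d, χ s(u, v) = some c ∧ χ s(u, w) = some d ∧ q = s(c, d) := by
  obtain ⟨c₀, c₁, a, b, p, hc, rfl, hp, rfl, he, ha, hb⟩ := h1
  have hu := p.fst_mem_support_of_mem_edges he
  obtain ⟨y, z, hne, hy, hz⟩ := two_edges p hp.1 u hu
    (by rintro rfl; simp at ha) (by rintro rfl; simp at hb)
  obtain ⟨w, hwv, hw⟩ : ∃ w, w ≠ v ∧ s(u, w) ∈ p.edges := by
    by_cases h : y = v
    · exact ⟨z, by rintro rfl; exact hne h, hz⟩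
    · exact ⟨y, h, hy⟩
  refine ⟨w, p.adj_of_mem_edges hw, ?_⟩
  rcases hp.2.2.1 _ he with h1 | h1 <;> rcases hp.2.2.1 _ hw with h2 | h2
  · exact absurd (inj_at hχ h2 h1) hwv
  · exact ⟨_, _, h1, h2, rfl⟩
  · exact ⟨_, _, h1, h2, Sym2.eq_swap⟩
  · exact absurd (inj_at hχ h2 h1) hwv

theorem le_degree {V : Type*} [Fintype V] [DecidableEq V]
    (G : SimpleGraph V) [DecidableRel G.Adj] {k : ℕ}
    (χ : Sym2 V → Option (Fin k)) (hχ : IsPartialColoring G k χ) (u v : V) :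
    {x : Sym2 (Fin k) × Finset (Sym2 V) |
        IsMaxAltPathPairInternal G χ x.1 x.2 s(u, v)}.ncard ≤ G.degree u := by
  classical
  rw [← SimpleGraph.card_neighborFinset_eq_degree, ← Set.ncard_coe_finset]
  have H : ∀ x : Sym2 (Fin k) × Finset (Sym2 V), ∃ w,
      IsMaxAltPathPairInternal G χ x.1 x.2 s(u, v) →
      (G.Adj u w ∧ ∃ c d, χ s(u, v) = some c ∧ χ s(u, w) = some d ∧ x.1 = s(c, d)) := by
    intro x
    by_cases h : IsMaxAltPathPairInternal G χ x.1 x.2 s(u, v)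
    · obtain ⟨w, hw⟩ := exists_nbr hχ h
      exact ⟨w, fun _ => hw⟩
    · exact ⟨u, fun h' => absurd h' h⟩
  choose f hf using H
  refine Set.ncard_le_ncard_of_injOn f ?_ ?_ (Set.toFinite _)
  · intro x hx
    simpa using (hf x hx).1
  · intro x hx y hy hxy
    obtain ⟨-, c, d, h1, h2, h3⟩ := hf x hx
    obtain ⟨-, c', d', h1', h2', h3'⟩ := hf y hy
    rw [hxy, h2'] at h2
    rw [h1'] at h1
    have e1 := Option.some.inj h1
    have e2 := Option.some.inj h2
    subst e1 e2
    have hq : x.1 = y.1 := h3.trans h3'.symm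
    have hx' : IsMaxAltPathPairInternal G χ y.1 x.2 s(u, v) := hq ▸ hx
    exact Prod.ext hq (uniq hχ hx' hy)

/-- A colored edge `e = (u,v)` is an internal edge of at most `w(e) = min (d(u), d(v))`
maximal alternating paths (over all pairs of distinct colors). -/
theorem internal_paths_le_weight {V : Type*} [Fintype V] [DecidableEq V]
    (G : SimpleGraph V) [DecidableRel G.Adj] {k : ℕ}
    (χ : Sym2 V → Option (Fin k)) (hχ : IsPartialColoring G k χ)
    (u v : V) (huv : G.Adj u v) (hcol : χ s(u, v) ≠ none) :
    {x : Sym2 (Fin k) × Finset (Sym2 V) |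
        IsMaxAltPathPairInternal G χ x.1 x.2 s(u, v)}.ncard
      ≤ min (G.degree u) (G.degree v) := by
  refine le_min (le_degree G χ hχ u v) ?_
  rw [Sym2.eq_swap]
  exact le_degree G χ hχ v u

end EC
end

section
/- Let χ be a partial (Δ+1)-edge-coloring of G. Then every colored edge of G is contained in at most Δ + 1 maximal alternating paths (over all pairs of distinct colors in {1,…,Δ+1}); consequently the sum of the lengths of all maximal alternating paths is at most m(Δ+1), where m is the number of edges of G. -/
namespace EC

open Classical

/-- `x = (q, S)` represents a maximal alternating path of `G` under `χ`: `q` is an unordered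
pair of distinct colors `{c₀, c₁}` and `S` is the edge set of a maximal `(c₀,c₁)`-alternating
path of `G`. -/
def IsMaxAltPathPair {V : Type*} [DecidableEq V] (G : SimpleGraph V) {k : ℕ}
    (χ : Sym2 V → Option (Fin k)) (q : Sym2 (Fin k)) (S : Finset (Sym2 V)) : Prop :=
  ∃ (c₀ c₁ : Fin k) (a b : V) (p : G.Walk a b),
    c₀ ≠ c₁ ∧ q = s(c₀, c₁) ∧ IsMaxAltPath G χ c₀ c₁ p ∧ S = p.edges.toFinset

theorem aux_interior {V : Type*} {G : SimpleGraph V} {a b : V} (p : G.Walk a b)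
    (hp : p.IsPath) (v : V) (hv : v ∈ p.support) (ha : v ≠ a) (hb : v ≠ b) :
    ∃ x y, x ≠ y ∧ s(v, x) ∈ p.edges ∧ s(v, y) ∈ p.edges := by
  induction p with
  | nil => simp at hv; exact absurd hv ha
  | @cons u w b h q ih =>
    rw [SimpleGraph.Walk.cons_isPath_iff] at hp
    by_cases hvw : v = w
    · subst hvw
      cases q with
      | nil => exact absurd rfl hb
      | @cons _ y _ h' r =>
        refine ⟨u, y, ?_, ?_, ?_⟩
        · rintro rfl
          apply hp.2
          simp
        · simp [Sym2.eq_swap]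
        · simp
    · have hv' : v ∈ q.support := by
        simp only [SimpleGraph.Walk.support_cons, List.mem_cons] at hv
        exact hv.resolve_left ha
      obtain ⟨x, y, hxy, h1, h2⟩ := ih hp.1 hv' hvw hb
      exact ⟨x, y, hxy, by simp [h1], by simp [h2]⟩

theorem aux_closed {V : Type*} {G : SimpleGraph V} {k : ℕ}
    {χ : Sym2 V → Option (Fin k)} (hχ : IsPartialColoring G k χ) {c₀ c₁ : Fin k} {a b : V}
    {p : G.Walk a b} (h : IsMaxAltPath G χ c₀ c₁ p)
    {f g : Sym2 V} {v : V} (hf : f ∈ p.edges) (hvf : v ∈ f) (hvg : v ∈ g)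
    (hg : χ g = some c₀ ∨ χ g = some c₁) : g ∈ p.edges := by
  obtain ⟨hp, hab, hcol, hA, hB⟩ := h
  have hv : v ∈ p.support := p.mem_support_of_mem_edges hf hvf
  obtain ⟨w, rfl⟩ := Sym2.mem_iff_exists.1 hvf
  obtain ⟨z, rfl⟩ := Sym2.mem_iff_exists.1 hvg
  by_cases h1 : v = a
  · subst h1
    rwa [hA.unique hg (hcol _ hf)]
  by_cases h2 : v = b
  · subst h2
    rwa [hB.unique hg (hcol _ hf)]
  obtain ⟨x, y, hxy, hx, hy⟩ := aux_interior p hp v hv h1 h2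
  have key : ∀ t u c, χ s(v, t) = some c → χ s(v, u) = some c → s(v, t) = s(v, u) := by
    intro t u c e1 e2
    by_contra hne
    exact hχ.2 _ _ hne ⟨v, by simp, by simp⟩ c e1 e2
  have hne : s(v, x) ≠ s(v, y) := by
    intro h; exact hxy (Sym2.congr_right.1 h)
  rcases hcol _ hx with cx | cx <;> rcases hcol _ hy with cy | cy
  · exact absurd (key _ _ _ cx cy) hne
  · rcases hg with hg | hg
    · rwa [key _ _ _ hg cx]
    · rwa [key _ _ _ hg cy]
  · rcases hg with hg | hg
    · rwa [key _ _ _ hg cy]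
    · rwa [key _ _ _ hg cx]
  · exact absurd (key _ _ _ cx cy) hne

theorem aux_A {V : Type*} {G : SimpleGraph V} (P : Sym2 V → Prop) (S : Sym2 V → Prop)
    (hS : ∀ f g v, S f → v ∈ f → v ∈ g → P g → S g) {a b : V} (p : G.Walk a b)
    (hP : ∀ e ∈ p.edges, P e) (h : ∃ f, S f ∧ a ∈ f) : ∀ e ∈ p.edges, S e := by
  induction p with
  | nil => simp
  | @cons u w b hh q ih =>
    obtain ⟨f, hf, hu⟩ := h
    have h0 : S s(u, w) := hS f _ u hf hu (by simp) (hP _ (by simp))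
    intro e he
    simp only [SimpleGraph.Walk.edges_cons, List.mem_cons] at he
    rcases he with rfl | he
    · exact h0
    · exact ih (fun e he => hP e (by simp [he])) ⟨_, h0, by simp⟩ e he

theorem aux_B {V : Type*} {G : SimpleGraph V} (P : Sym2 V → Prop) (S : Sym2 V → Prop)
    (hS : ∀ f g v, S f → v ∈ f → v ∈ g → P g → S g) {a b : V} (p : G.Walk a b)
    (hP : ∀ e ∈ p.edges, P e) (h : ∃ f ∈ p.edges, S f) : ∃ f, S f ∧ a ∈ f := by
  induction p with
  | nil => simp at h
  | @cons u w b hh q ih =>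
    obtain ⟨f, hf, hu⟩ := h
    simp only [SimpleGraph.Walk.edges_cons, List.mem_cons] at hf
    rcases hf with rfl | hf
    · exact ⟨_, hu, by simp⟩
    · obtain ⟨g, hg, hw⟩ := ih (fun e he => hP e (by simp [he])) ⟨f, hf, hu⟩
      exact ⟨s(u, w), hS g _ w hg hw (by simp) (hP _ (by simp)), by simp⟩

theorem aux_sub {V : Type*} {G : SimpleGraph V} {k : ℕ}
    {χ : Sym2 V → Option (Fin k)} (hχ : IsPartialColoring G k χ) {c₀ c₁ : Fin k} {a b a' b' : V}
    {p : G.Walk a b} {p' : G.Walk a' b'} (h : IsMaxAltPath G χ c₀ c₁ p)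
    (h' : IsMaxAltPath G χ c₀ c₁ p') {e : Sym2 V} (he : e ∈ p.edges) (he' : e ∈ p'.edges) :
    ∀ f ∈ p'.edges, f ∈ p.edges := by
  have hS : ∀ f g v, f ∈ p.edges → v ∈ f → v ∈ g → (χ g = some c₀ ∨ χ g = some c₁) →
      g ∈ p.edges := fun f g v h1 h2 h3 h4 => aux_closed hχ h h1 h2 h3 h4
  exact aux_A (fun g => χ g = some c₀ ∨ χ g = some c₁) (fun f => f ∈ p.edges) hS p' h'.2.2.1
    (aux_B (fun g => χ g = some c₀ ∨ χ g = some c₁) (fun f => f ∈ p.edges) hS p' h'.2.2.1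
      ⟨e, he', he⟩)

theorem aux_symm {V : Type*} {G : SimpleGraph V} {k : ℕ}
    {χ : Sym2 V → Option (Fin k)} {c₀ c₁ : Fin k} {a b : V}
    {p : G.Walk a b} (h : IsMaxAltPath G χ c₀ c₁ p) : IsMaxAltPath G χ c₁ c₀ p := by
  obtain ⟨h1, h2, h3, h4, h5⟩ := h
  exact ⟨h1, h2, fun e he => (h3 e he).symm, by simpa only [or_comm] using h4,
    by simpa only [or_comm] using h5⟩

theorem aux_unique {V : Type*} [DecidableEq V] {G : SimpleGraph V} {k : ℕ}
    {χ : Sym2 V → Option (Fin k)} (hχ : IsPartialColoring G k χ) {q : Sym2 (Fin k)}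
    {S T : Finset (Sym2 V)} (hS : IsMaxAltPathPair G χ q S) (hT : IsMaxAltPathPair G χ q T)
    {e : Sym2 V} (heS : e ∈ S) (heT : e ∈ T) : S = T := by
  obtain ⟨c₀, c₁, a, b, p, hc, rfl, hp, rfl⟩ := hS
  obtain ⟨d₀, d₁, a', b', p', hd, hq, hp', rfl⟩ := hT
  rw [List.mem_toFinset] at heS heT
  have hp2 : IsMaxAltPath G χ c₀ c₁ p' := by
    rcases Sym2.eq_iff.1 hq with ⟨rfl, rfl⟩ | ⟨rfl, rfl⟩
    · exact hp'
    · exact aux_symm hp'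
  ext f
  simp only [List.mem_toFinset]
  exact ⟨aux_sub hχ hp2 hp heT heS f, aux_sub hχ hp hp2 heS heT f⟩

theorem aux_mem {V : Type*} [DecidableEq V] {G : SimpleGraph V} {k : ℕ}
    {χ : Sym2 V → Option (Fin k)} {q : Sym2 (Fin k)}
    {S : Finset (Sym2 V)} (hS : IsMaxAltPathPair G χ q S) {e : Sym2 V} (heS : e ∈ S) :
    e ∈ G.edgeSet ∧ ∃ c, χ e = some c ∧ c ∈ q := by
  obtain ⟨c₀, c₁, a, b, p, hc, rfl, hp, rfl⟩ := hS
  rw [List.mem_toFinset] at heS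
  refine ⟨p.edges_subset_edgeSet heS, ?_⟩
  rcases hp.2.2.1 e heS with h | h
  · exact ⟨_, h, by simp⟩
  · exact ⟨_, h, by simp⟩

theorem aux_count {V : Type*} [Fintype V] [DecidableEq V] {G : SimpleGraph V} {k : ℕ}
    {χ : Sym2 V → Option (Fin k)} (hχ : IsPartialColoring G k χ) (e : Sym2 V) :
    {x : Sym2 (Fin k) × Finset (Sym2 V) | IsMaxAltPathPair G χ x.1 x.2 ∧ e ∈ x.2}.ncard ≤ k := by
  rcases hc : χ e with _ | c
  · have : {x : Sym2 (Fin k) × Finset (Sym2 V) | IsMaxAltPathPair G χ x.1 x.2 ∧ e ∈ x.2} = ∅ := by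
      ext x
      simp only [Set.mem_setOf_eq, Set.mem_empty_iff_false, iff_false]
      rintro ⟨h1, h2⟩
      obtain ⟨-, c, h, -⟩ := aux_mem h1 h2
      simp [hc] at h
    simp [this]
  · have h1 := Set.ncard_le_ncard_of_injOn (s := {x : Sym2 (Fin k) × Finset (Sym2 V) |
        IsMaxAltPathPair G χ x.1 x.2 ∧ e ∈ x.2})
      (t := Set.range (fun d : Fin k => s(c, d))) Prod.fst (by
        rintro x ⟨h1, h2⟩
        obtain ⟨-, c', h, hq⟩ := aux_mem h1 h2
        rw [hc] at h
        obtain rfl := Option.some.inj h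
        obtain ⟨d, hd⟩ := Sym2.mem_iff_exists.1 hq
        exact ⟨d, hd.symm⟩) (by
        rintro ⟨q, S⟩ ⟨h1, h2⟩ ⟨q', T⟩ ⟨h3, h4⟩ hqq
        simp only at hqq h1 h2 h3 h4
        subst hqq
        rw [aux_unique hχ h1 h3 h2 h4]) (Set.toFinite _)
    refine h1.trans ?_
    rw [← Set.image_univ]
    refine (Set.ncard_image_le (Set.toFinite _)).trans ?_
    simp [Set.ncard_univ]

/-- For a partial `(Δ+1)`-edge-coloring of `G`: every colored edge of `G` is contained in at
most `Δ + 1` maximal alternating paths (over all pairs of distinct colors); consequently the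
sum of the lengths of all maximal alternating paths is at most `m (Δ + 1)`, where `m` is the
number of edges of `G`. -/
theorem paths_containing_edge_and_total_length {V : Type*} [Fintype V] [DecidableEq V]
    (G : SimpleGraph V) [DecidableRel G.Adj]
    (χ : Sym2 V → Option (Fin (G.maxDegree + 1)))
    (hχ : IsPartialColoring G (G.maxDegree + 1) χ) :
    (∀ e ∈ G.edgeSet, χ e ≠ none →
      {x : Sym2 (Fin (G.maxDegree + 1)) × Finset (Sym2 V) |
          IsMaxAltPathPair G χ x.1 x.2 ∧ e ∈ x.2}.ncard ≤ G.maxDegree + 1) ∧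
    ∑ x ∈ (Set.toFinite {x : Sym2 (Fin (G.maxDegree + 1)) × Finset (Sym2 V) |
        IsMaxAltPathPair G χ x.1 x.2}).toFinset, x.2.card
      ≤ G.edgeFinset.card * (G.maxDegree + 1) := by
  refine ⟨fun e _ _ => aux_count hχ e, ?_⟩
  have h1 : ∀ x ∈ (Set.toFinite {x : Sym2 (Fin (G.maxDegree + 1)) × Finset (Sym2 V) |
        IsMaxAltPathPair G χ x.1 x.2}).toFinset,
      x.2.card = ∑ e ∈ G.edgeFinset, if e ∈ x.2 then 1 else 0 := by
    intro x hx
    simp only [Set.Finite.mem_toFinset, Set.mem_setOf_eq] at hx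
    rw [← Finset.card_filter]
    congr 1
    ext e
    simp only [Finset.mem_filter, SimpleGraph.mem_edgeFinset]
    exact ⟨fun h => ⟨(aux_mem hx h).1, h⟩, fun h => h.2⟩
  rw [Finset.sum_congr rfl h1, Finset.sum_comm, ← smul_eq_mul]
  apply Finset.sum_le_card_nsmul
  intro e _
  refine le_trans (le_of_eq ?_) (aux_count hχ e)
  rw [← Finset.card_filter, ← Set.ncard_coe_finset]
  congr 1
  ext x
  simp

end EC
end

section
/- Let G be a finite simple graph with m edges, let i ≥ 0, and let H₁, …, H_r be spanning subgraphs of G that partition the edge set of G and satisfy d_{H_j}(v) ≤ 2^{−i}·d_G(v) + 2 for every vertex v and every j ∈ {1,…,r}. Then Σ_{j=1}^{r} w(H_j) ≤ 2^{−i}·w(G) + 2m, where w(H) = Σ_{e=(u,v) ∈ E(H)} min(d_H(u), d_H(v)). -/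
namespace EC

/-- The weight of a graph `H`: the sum, over the edges `e = (u,v)` of `H`, of
`min (d_H(u), d_H(v))`. -/
noncomputable def weight {V : Type*} [Fintype V] (H : SimpleGraph V) : ℕ :=
  ∑ e ∈ (Set.toFinite H.edgeSet).toFinset,
    Sym2.lift ⟨fun u v => min (H.neighborSet u).ncard (H.neighborSet v).ncard,
      fun _ _ => min_comm _ _⟩ e

/-- Let `G` be a finite simple graph with `m` edges, let `i ≥ 0`, and let `H 1, …, H r` be
spanning subgraphs of `G` that partition the edge set of `G` and satisfy
`d_{H j}(v) ≤ 2^{−i}·d_G(v) + 2` for every vertex `v` and every `j`. Then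
`Σ_j w(H j) ≤ 2^{−i}·w(G) + 2m`. -/
theorem sum_weights_of_partition {V : Type*} [Fintype V] [DecidableEq V]
    (G : SimpleGraph V) [DecidableRel G.Adj]
    (i r : ℕ) (H : Fin r → SimpleGraph V)
    (hle : ∀ j, H j ≤ G)
    (hpart : ∀ e ∈ G.edgeSet, ∃! j, e ∈ (H j).edgeSet)
    (hdeg : ∀ (j : Fin r) (v : V),
      (((H j).neighborSet v).ncard : ℝ) ≤ (2 : ℝ) ^ (-(i : ℤ)) * (G.degree v : ℝ) + 2) :
    (∑ j, (weight (H j) : ℝ))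
      ≤ (2 : ℝ) ^ (-(i : ℤ)) * (weight G : ℝ) + 2 * (G.edgeFinset.card : ℝ) := by
  classical
  set c : ℝ := (2 : ℝ) ^ (-(i : ℤ)) with hc
  have hc0 : 0 ≤ c := by positivity
  let g : Sym2 V → ℕ := fun e =>
    Sym2.lift ⟨fun u v => min (G.neighborSet u).ncard (G.neighborSet v).ncard,
      fun _ _ => min_comm _ _⟩ e
  have hG : ∀ v, (G.neighborSet v).ncard = G.degree v := by
    intro v
    rw [Set.ncard_eq_toFinset_card', SimpleGraph.degree, SimpleGraph.neighborFinset]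
  have hdisj : (↑(Finset.univ : Finset (Fin r)) : Set (Fin r)).PairwiseDisjoint
      (fun j => (Set.toFinite (H j).edgeSet).toFinset) := by
    intro a _ b _ hab
    refine Finset.disjoint_left.mpr ?_
    intro e ha hb
    rw [Set.Finite.mem_toFinset] at ha hb
    exact hab ((hpart e (SimpleGraph.edgeSet_mono (hle a) ha)).unique ha hb)
  have hun : (Finset.univ : Finset (Fin r)).biUnion
      (fun j => (Set.toFinite (H j).edgeSet).toFinset) = (Set.toFinite G.edgeSet).toFinset := by
    ext e
    simp only [Finset.mem_biUnion, Finset.mem_univ, true_and, Set.Finite.mem_toFinset]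
    constructor
    · rintro ⟨j, hj⟩
      exact SimpleGraph.edgeSet_mono (hle j) hj
    · intro he
      exact (hpart e he).exists
  have hcard : (Set.toFinite G.edgeSet).toFinset = G.edgeFinset := by
    ext e
    simp
  have h1 : ∀ j, (weight (H j) : ℝ) ≤
      ∑ e ∈ (Set.toFinite (H j).edgeSet).toFinset, (c * (g e : ℝ) + 2) := by
    intro j
    unfold weight
    rw [Nat.cast_sum]
    refine Finset.sum_le_sum ?_
    intro e _
    induction e using Sym2.ind with
    | _ u v =>
      simp only [g, Sym2.lift_mk, hG]
      have hu := hdeg j u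
      have hv := hdeg j v
      rcases le_total (G.degree u) (G.degree v) with h | h
      · rw [min_eq_left h]
        exact le_trans (by exact_mod_cast min_le_left _ _) hu
      · rw [min_eq_right h]
        exact le_trans (by exact_mod_cast min_le_right _ _) hv
  calc (∑ j, (weight (H j) : ℝ))
      ≤ ∑ j, ∑ e ∈ (Set.toFinite (H j).edgeSet).toFinset, (c * (g e : ℝ) + 2) :=
        Finset.sum_le_sum fun j _ => h1 j
    _ = ∑ e ∈ (Set.toFinite G.edgeSet).toFinset, (c * (g e : ℝ) + 2) := by
        rw [← hun, Finset.sum_biUnion hdisj]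
    _ = c * (weight G : ℝ) + 2 * (G.edgeFinset.card : ℝ) := by
        rw [Finset.sum_add_distrib, ← Finset.mul_sum, ← Nat.cast_sum, Finset.sum_const, hcard]
        unfold weight
        rw [hcard, nsmul_eq_mul, mul_comm (2 : ℝ)]

end EC
end
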